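/- arXiv:2311.17849 — 5 statements merged into one kernel-verified Lean document; each statement's English description precedes it below -/
import Mathlib

section
/- Let G = (V, E) be a finite digraph and R ⊆ V × V. If there exists a path in G satisfying the First-Visits conditions for R, then there exists a path in G of length at most (|V| − 1)² satisfying the First-Visits conditions for R. -/
/-- A path of length `k` in the digraph with edge relation `E`, given as the
sequence of vertices `ρ 0, ρ 1, …, ρ k`. -/
def IsPath {V : Type*} (E : V → V → Prop) (k : ℕ) (ρ : ℕ → V) : Prop :=
  ∀ i < k, E (ρ i) (ρ (i + 1))

/-- The path `ρ 0, …, ρ k` satisfies the First-Visits conditions for `R`: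
for every `(u, v) ∈ R`, the path visits `u`, and every occurrence of `v`
is preceded by an occurrence of `u`. -/
def FirstVisits {V : Type*} (R : Set (V × V)) (k : ℕ) (ρ : ℕ → V) : Prop :=
  ∀ p ∈ R, (∃ i ≤ k, ρ i = p.1) ∧ ∀ j ≤ k, ρ j = p.2 → ∃ i < j, ρ i = p.1

/-- Position `t` is the first occurrence of its vertex. -/
def FirstOcc {V : Type*} (ρ : ℕ → V) (t : ℕ) : Prop := ∀ s < t, ρ s ≠ ρ t

lemma exists_firstOcc {V : Type*} (ρ : ℕ → V) (i : ℕ) :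
    ∃ t ≤ i, ρ t = ρ i ∧ FirstOcc ρ t := by
  classical
  have h : ∃ t, ρ t = ρ i := ⟨i, rfl⟩
  refine ⟨Nat.find h, Nat.find_min' h rfl, Nat.find_spec h, ?_⟩
  intro s hs he
  exact Nat.find_min h hs (he.trans (Nat.find_spec h))

lemma drop_last {V : Type*} {E : V → V → Prop} {R : Set (V × V)} {k : ℕ} {ρ : ℕ → V}
    (hp : IsPath E (k+1) ρ) (hf : FirstVisits R (k+1) ρ) (hk : ¬ FirstOcc ρ (k+1)) :
    IsPath E k ρ ∧ FirstVisits R k ρ := by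
  refine ⟨fun i hi => hp i (by omega), fun p hpR => ⟨?_, fun j hj => (hf p hpR).2 j (by omega)⟩⟩
  obtain ⟨i, hi, he⟩ := (hf p hpR).1
  obtain ⟨t, ht, hte, htf⟩ := exists_firstOcc ρ i
  have : t ≠ k + 1 := by rintro rfl; exact hk htf
  exact ⟨t, by omega, hte.trans he⟩

lemma cut_loop {V : Type*} {E : V → V → Prop} {R : Set (V × V)} {k : ℕ} {ρ : ℕ → V}
    (hp : IsPath E k ρ) (hf : FirstVisits R k ρ) {i j : ℕ} (hij : i < j) (hjk : j ≤ k)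
    (he : ρ i = ρ j) (hno : ∀ t, i < t → t < j → ¬ FirstOcc ρ t) :
    ∃ ρ' : ℕ → V, IsPath E (k - (j - i)) ρ' ∧ FirstVisits R (k - (j - i)) ρ' := by
  have key : ∀ t, FirstOcc ρ t → t ≤ i ∨ j < t := by
    intro t ht
    by_contra hc
    push Not at hc
    rcases Nat.lt_or_ge t j with h | h
    · exact hno t hc.1 h ht
    · have : t = j := by omega
      subst this
      exact ht i hij he
  refine ⟨fun s => if s ≤ i then ρ s else ρ (s + (j - i)), ?_, ?_⟩
  · intro s hs
    rcases lt_trichotomy s i with h | h | h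
    · simp only [if_pos h.le, if_pos (show s + 1 ≤ i by omega)]
      exact hp s (by omega)
    · subst h
      simp only [if_pos le_rfl, if_neg (show ¬ s + 1 ≤ s by omega)]
      have := hp j (by omega)
      rw [he]
      rwa [show s + 1 + (j - s) = j + 1 by omega]
    · simp only [if_neg (show ¬ s ≤ i by omega), if_neg (show ¬ s + 1 ≤ i by omega)]
      have := hp (s + (j - i)) (by omega)
      rwa [show s + 1 + (j - i) = s + (j - i) + 1 by omega]
  · have vis : ∀ q, ∃ t, (if t ≤ i then ρ t else ρ (t + (j - i))) = ρ q ∧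
        ((t ≤ i ∧ t ≤ q) ∨ (i < t ∧ t + (j - i) ≤ q)) := by
      intro q
      obtain ⟨t, ht, hte, htf⟩ := exists_firstOcc ρ q
      rcases key t htf with h | h
      · exact ⟨t, by simp [h, hte], by omega⟩
      · refine ⟨t - (j - i), ?_, by omega⟩
        rw [if_neg (by omega), show t - (j - i) + (j - i) = t by omega, hte]
    intro p hpR
    refine ⟨?_, ?_⟩
    · obtain ⟨q, hq, hqe⟩ := (hf p hpR).1
      obtain ⟨t, h1, h2⟩ := vis q
      exact ⟨t, by omega, h1.trans hqe⟩
    · intro s hs hse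
      by_cases h : s ≤ i
      · simp only [if_pos h] at hse
        obtain ⟨q, hq, hqe⟩ := (hf p hpR).2 s (by omega) hse
        obtain ⟨t, h1, h2⟩ := vis q
        exact ⟨t, by omega, h1.trans hqe⟩
      · simp only [if_neg h] at hse
        obtain ⟨q, hq, hqe⟩ := (hf p hpR).2 (s + (j - i)) (by omega) hse
        obtain ⟨t, h1, h2⟩ := vis q
        exact ⟨t, by omega, h1.trans hqe⟩

lemma firstOcc_inj {V : Type*} {ρ : ℕ → V} {s t : ℕ} (hs : FirstOcc ρ s) (ht : FirstOcc ρ t)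
    (h : ρ s = ρ t) : s = t := by
  rcases lt_trichotomy s t with h1 | h1 | h1
  · exact absurd h (ht s h1)
  · exact h1
  · exact absurd h.symm (hs t h1)

theorem firstVisits_short_path {V : Type*} [Fintype V] (E : V → V → Prop)
    (R : Set (V × V))
    (h : ∃ (k : ℕ) (ρ : ℕ → V), IsPath E k ρ ∧ FirstVisits R k ρ) :
    ∃ (k : ℕ) (ρ : ℕ → V), k ≤ (Fintype.card V - 1) ^ 2 ∧
      IsPath E k ρ ∧ FirstVisits R k ρ := by
  classical
  obtain ⟨ρ, hp, hf⟩ := Nat.find_spec h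
  have hmin : ∀ m < Nat.find h, ¬ ∃ ρ : ℕ → V, IsPath E m ρ ∧ FirstVisits R m ρ :=
    fun m hm => Nat.find_min h hm
  generalize Nat.find h = k at hp hf hmin
  refine ⟨k, ρ, ?_, hp, hf⟩
  have hlast : FirstOcc ρ k := by
    by_contra hc
    cases k with
    | zero => exact hc (fun s hs => absurd hs (by omega))
    | succ k => exact hmin k (by omega) ⟨ρ, drop_last hp hf hc⟩
  have hloop : ∀ i j, i < j → j ≤ k → ρ i = ρ j → ∃ t, i < t ∧ t < j ∧ FirstOcc ρ t := by
    intro i j hij hjk he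
    by_contra hc
    push Not at hc
    exact hmin (k - (j - i)) (by omega) (cut_loop hp hf hij hjk he hc)
  have hnext : ∀ s, ∃ t, s < k → (s < t ∧ t ≤ k ∧ FirstOcc ρ t ∧
      ∀ t', s < t' → FirstOcc ρ t' → t ≤ t') := by
    intro s
    by_cases hs : s < k
    · have hex : ∃ t, s < t ∧ FirstOcc ρ t := ⟨k, hs, hlast⟩
      exact ⟨Nat.find hex, fun _ => ⟨(Nat.find_spec hex).1, Nat.find_min' hex ⟨hs, hlast⟩,
        (Nat.find_spec hex).2, fun t' h1 h2 => Nat.find_min' hex ⟨h1, h2⟩⟩⟩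
    · exact ⟨0, fun h => absurd h hs⟩
  choose nx hnx using hnext
  let T : Finset (Σ _ : V, V) := (Finset.univ.erase (ρ 0)).sigma fun a => Finset.univ.erase a
  have hT : T.card = (Fintype.card V - 1) ^ 2 := by
    simp [T, Finset.card_sigma, Finset.card_erase_of_mem, Finset.card_univ, sq]
  rw [← hT, ← Finset.card_range k]
  apply Finset.card_le_card_of_injOn (fun s => (⟨ρ (nx s), ρ s⟩ : Σ _ : V, V))
  · intro s hs
    have hs' : s < k := by simpa using hs
    obtain ⟨h1, h2, h3, h4⟩ := hnx s hs'
    have a1 : ρ (nx s) ≠ ρ 0 := (h3 0 (by omega)).symm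
    have a2 : ρ s ≠ ρ (nx s) := h3 s h1
    simp [T, a1, a2]
  · have main : ∀ s s', s < s' → s' < k → ρ (nx s) = ρ (nx s') → ρ s = ρ s' → False := by
      intro s s' hss hs' e1 e2
      obtain ⟨h1, h2, h3, h4⟩ := hnx s (by omega)
      obtain ⟨g1, g2, g3, g4⟩ := hnx s' hs'
      have := firstOcc_inj h3 g3 e1
      obtain ⟨t, t1, t2, t3⟩ := hloop s s' hss hs'.le e2
      have := h4 t t1 t3
      omega
    intro s hs s' hs' e
    have hs1 : s < k := by simpa using hs
    have hs2 : s' < k := by simpa using hs'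
    simp only [Sigma.mk.injEq, heq_eq_eq] at e
    rcases lt_trichotomy s s' with h1 | h1 | h1
    · exact (main s s' h1 hs2 e.1 e.2).elim
    · exact h1
    · exact (main s' s h1 hs1 e.1.symm e.2.symm).elim
end

section
/- Let G = (V, E) be a finite digraph and R ⊆ V × V. If there exists a path in G satisfying the Last-Visits conditions for R, then there exists a path in G of length at most (|V| − 1)² satisfying the Last-Visits conditions for R. -/
/-- The path `ρ 0, …, ρ k` satisfies the Last-Visits conditions for `R`:
for every `(v, u) ∈ R`, the path visits `u`, and every occurrence of `v`
is followed by a strictly later occurrence of `u`. -/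
def LastVisits {V : Type*} (R : Set (V × V)) (k : ℕ) (ρ : ℕ → V) : Prop :=
  ∀ p ∈ R, (∃ j ≤ k, ρ j = p.2) ∧ ∀ i ≤ k, ρ i = p.1 → ∃ j ≤ k, i < j ∧ ρ j = p.2

/-- Position `p` is the last visit of its vertex. -/
def IsLastPos {V : Type*} (k : ℕ) (ρ : ℕ → V) (p : ℕ) : Prop :=
  p ≤ k ∧ ∀ q ≤ k, p < q → ρ q ≠ ρ p

theorem exists_lastPos {V : Type*} (k : ℕ) (ρ : ℕ → V) (c : ℕ) (hc : c ≤ k) :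
    ∃ d, c ≤ d ∧ IsLastPos k ρ d ∧ ρ d = ρ c := by
  classical
  have hs : ρ (Nat.findGreatest (fun d => ρ d = ρ c) k) = ρ c :=
    Nat.findGreatest_spec (P := fun d => ρ d = ρ c) hc rfl
  refine ⟨Nat.findGreatest (fun d => ρ d = ρ c) k, Nat.le_findGreatest hc rfl,
    ⟨Nat.findGreatest_le k, ?_⟩, hs⟩
  intro q hq hlt he
  exact Nat.findGreatest_is_greatest hlt hq (he.trans hs)

/-- Cutting a block of positions containing no last visit. -/
theorem cut_path {V : Type*} (E : V → V → Prop) (R : Set (V × V)) (k : ℕ) (ρ : ℕ → V)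
    (hp : IsPath E k ρ) (hl : LastVisits R k ρ) (a b : ℕ) (hab : a < b) (hbk : b ≤ k)
    (hj : a = 0 ∨ ρ a = ρ b) (hno : ∀ c, a ≤ c → c < b → ¬ IsLastPos k ρ c) :
    ∃ ρ' : ℕ → V, IsPath E (k - (b - a)) ρ' ∧ LastVisits R (k - (b - a)) ρ' := by
  refine ⟨fun i => if i < a then ρ i else ρ (i + (b - a)), ?_, ?_⟩
  · intro i hi
    dsimp only
    by_cases h1 : i + 1 < a
    · rw [if_pos (by omega), if_pos h1]
      exact hp i (by omega)
    · by_cases h2 : i < a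
      · rw [if_pos h2, if_neg h1]
        have e : i + 1 + (b - a) = b := by omega
        have e' : i + 1 = a := by omega
        rw [e]
        rcases hj with h0 | h0
        · omega
        · rw [← h0, ← e']
          exact hp i (by omega)
      · rw [if_neg h2, if_neg h1]
        have e : i + 1 + (b - a) = i + (b - a) + 1 := by omega
        rw [e]
        exact hp _ (by omega)
  · have back : ∀ j ≤ k, ∃ d, j ≤ d ∧ d ≤ k ∧ (d < a ∨ b ≤ d) ∧ ρ d = ρ j := by
      intro j hjk
      obtain ⟨d, hd, hL, he⟩ := exists_lastPos k ρ j hjk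
      refine ⟨d, hd, hL.1, ?_, he⟩
      by_contra hcon
      exact hno d (by omega) (by omega) hL
    intro p hpR
    obtain ⟨⟨j, hjk, hju⟩, hnext⟩ := hl p hpR
    constructor
    · obtain ⟨d, hd, hdk, hor, he⟩ := back j hjk
      rcases hor with h1 | h1
      · exact ⟨d, by omega, by dsimp only; rw [if_pos h1, he, hju]⟩
      · refine ⟨d - (b - a), by omega, ?_⟩
        dsimp only
        rw [if_neg (by omega), Nat.sub_add_cancel (by omega), he, hju]
    · intro i hi hiv
      dsimp only at hiv
      by_cases h1 : i < a
      · rw [if_pos h1] at hiv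
        obtain ⟨j, hjk, hij, hju⟩ := hnext i (by omega) hiv
        obtain ⟨d, hd, hdk, hor, he⟩ := back j hjk
        rcases hor with h2 | h2
        · exact ⟨d, by omega, by omega, by dsimp only; rw [if_pos h2, he, hju]⟩
        · refine ⟨d - (b - a), by omega, by omega, ?_⟩
          dsimp only
          rw [if_neg (by omega), Nat.sub_add_cancel (by omega), he, hju]
      · rw [if_neg h1] at hiv
        obtain ⟨j, hjk, hij, hju⟩ := hnext (i + (b - a)) (by omega) hiv
        obtain ⟨d, hd, hdk, hor, he⟩ := back j hjk
        refine ⟨d - (b - a), by omega, by omega, ?_⟩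
        dsimp only
        rw [if_neg (by omega), Nat.sub_add_cancel (by omega), he, hju]

theorem lastVisits_short_path {V : Type*} [Fintype V] (E : V → V → Prop)
    (R : Set (V × V))
    (h : ∃ (k : ℕ) (ρ : ℕ → V), IsPath E k ρ ∧ LastVisits R k ρ) :
    ∃ (k : ℕ) (ρ : ℕ → V), k ≤ (Fintype.card V - 1) ^ 2 ∧
      IsPath E k ρ ∧ LastVisits R k ρ := by
  classical
  obtain ⟨ρ, hp, hl⟩ := Nat.find_spec h
  have hmin : ∀ m < Nat.find h, ¬ ∃ ρ : ℕ → V, IsPath E m ρ ∧ LastVisits R m ρ :=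
    fun m hm => Nat.find_min h hm
  generalize Nat.find h = k at hp hl hmin
  refine ⟨k, ρ, ?_, hp, hl⟩
  have key : ∀ a b, a < b → b ≤ k → (a = 0 ∨ ρ a = ρ b) →
      ∃ c, a ≤ c ∧ c < b ∧ IsLastPos k ρ c := by
    intro a b hab hbk hj
    by_contra hcon
    push Not at hcon
    exact hmin _ (by omega) (cut_path E R k ρ hp hl a b hab hbk hj hcon)
  rcases Nat.eq_zero_or_pos k with hk | hk
  · omega
  have h0 : IsLastPos k ρ 0 := by
    obtain ⟨c, _, hc, hL⟩ := key 0 1 (by omega) hk (Or.inl rfl)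
    have : c = 0 := by omega
    rwa [this] at hL
  have hg : ∀ p, 1 ≤ p → ∃ g, g < p ∧ IsLastPos k ρ g ∧
      ∀ c < p, IsLastPos k ρ c → c ≤ g := by
    intro p hp1
    refine ⟨Nat.findGreatest (IsLastPos k ρ) (p - 1), ?_, ?_, ?_⟩
    · have := Nat.findGreatest_le (P := IsLastPos k ρ) (p - 1)
      omega
    · exact Nat.findGreatest_spec (P := IsLastPos k ρ) (Nat.zero_le _) h0
    · intro c hc hL
      exact Nat.le_findGreatest (by omega) hL
  choose! g hg1 hg2 hg3 using hg
  have hinj : ∀ p p', 1 ≤ p → p < p' → p' ≤ k → ρ (g p) = ρ (g p') → ρ p ≠ ρ p' := by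
    intro p p' h1 hlt hle e1 e2
    obtain ⟨c, hc1, hc2, hL⟩ := key p p' hlt hle (Or.inr e2)
    have i1 := hg3 p' (by omega) c hc2 hL
    have i2 := hg1 p h1
    exact (hg2 p h1).2 (g p') (hg2 p' (by omega)).1 (by omega) e1.symm
  have hcard : (Finset.Icc 1 k).card ≤
      ((Finset.univ.erase (ρ k)) ×ˢ (Finset.univ.erase (ρ 0))).card := by
    apply Finset.card_le_card_of_injOn (fun p => (ρ (g p), ρ p))
    · intro p hpm
      have hpm' := Finset.mem_Icc.mp hpm
      have i1 := hg1 p hpm'.1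
      simp only [Finset.coe_product, Set.mem_prod, Finset.mem_coe, Finset.mem_erase,
        Finset.mem_univ, and_true]
      exact ⟨fun e => (hg2 p hpm'.1).2 k le_rfl (by omega) e.symm,
        h0.2 p hpm'.2 (by omega)⟩
    · intro p hpm p' hpm' e
      have m1 := Finset.mem_Icc.mp hpm
      have m2 := Finset.mem_Icc.mp hpm'
      have e1 : ρ (g p) = ρ (g p') := congrArg Prod.fst e
      have e2 : ρ p = ρ p' := congrArg Prod.snd e
      rcases lt_trichotomy p p' with hh | hh | hh
      · exact absurd e2 (hinj p p' m1.1 hh m2.2 e1)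
      · exact hh
      · exact absurd e2.symm (hinj p' p m2.1 hh m1.2 e1.symm)
  rw [Finset.card_product, Finset.card_erase_of_mem (Finset.mem_univ _),
    Finset.card_erase_of_mem (Finset.mem_univ _), Nat.card_Icc, Finset.card_univ] at hcard
  rw [sq]
  omega
end

section
/- Let G = (V, E) be a finite strongly connected digraph and R ⊆ V × V. Let A = (V, Σ, δ) be a complete DFA with state set V such that (i) for every q ∈ V and a ∈ Σ, either (q, δ(q, a)) ∈ E or δ(q, a) = q; (ii) for every edge (u, v) ∈ E there exists a ∈ Σ with δ(u, a) = v; and (iii) A is synchronizing. Then G contains a path satisfying the Last-Visits conditions for R if and only if there exists a word w ∈ Σ* that synchronizes A and satisfies R ⊆ ℛ^{ℓ<ℓ}_p(w). -/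
/-- Extension of the transition function `δ` to words. -/
def dStar {Q A : Type*} (δ : Q → A → Q) (q : Q) (w : List A) : Q :=
  w.foldl δ q

/-- A word `w` synchronizes the complete DFA with transition function `δ`:
it maps every state to one particular state. -/
def Synchronizes {Q A : Type*} (δ : Q → A → Q) (w : List A) : Prop :=
  ∃ q0 : Q, ∀ q : Q, dStar δ q w = q0

/-- `last(p, w, {r})`: the largest `i ≤ |w|` such that the path labeled by `w`
starting at `r` visits `p` at position `i`, or `⊥ = -∞` if there is none. -/
def lastVisit {Q A : Type*} [DecidableEq Q] (δ : Q → A → Q) (w : List A)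
    (r p : Q) : WithBot ℕ :=
  ((Finset.range (w.length + 1)).filter (fun i => dStar δ r (w.take i) = p)).max

/-- The traversal relation `ℛ^{ℓ<ℓ}_p(w)` ("ℓ < ℓ on paths"). -/
def RelLtLtPaths {Q A : Type*} [DecidableEq Q] (δ : Q → A → Q) (w : List A) :
    Set (Q × Q) :=
  {pq | pq.1 ≠ pq.2 ∧ ∀ r : Q, lastVisit δ w r pq.1 < lastVisit δ w r pq.2}


theorem lastVisit_lt_iff {Q A : Type*} [DecidableEq Q] (δ : Q → A → Q) (w : List A) (r p q : Q) :
    lastVisit δ w r p < lastVisit δ w r q ↔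
      (∃ j ≤ w.length, dStar δ r (w.take j) = q) ∧
      ∀ i ≤ w.length, dStar δ r (w.take i) = p →
        ∃ j ≤ w.length, i < j ∧ dStar δ r (w.take j) = q := by
  unfold lastVisit
  constructor
  · intro h
    obtain ⟨m, hm⟩ := WithBot.ne_bot_iff_exists.1 (ne_bot_of_gt h)
    have hm' := Finset.mem_of_max hm.symm
    simp only [Finset.mem_filter, Finset.mem_range] at hm'
    refine ⟨⟨m, by omega, hm'.2⟩, fun i hi hp => ⟨m, by omega, ?_, hm'.2⟩⟩
    have h4 := Finset.le_max (s := (Finset.range (w.length + 1)).filter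
      (fun i => dStar δ r (w.take i) = p)) (a := i) (by simp; exact ⟨by omega, hp⟩)
    rw [← hm] at h
    exact WithBot.coe_lt_coe.1 (lt_of_le_of_lt h4 h)
  · rintro ⟨⟨j, hj, hq⟩, h⟩
    have key : ∀ j ≤ w.length, dStar δ r (w.take j) = q → (j : WithBot ℕ) ≤
        ((Finset.range (w.length + 1)).filter (fun i => dStar δ r (w.take i) = q)).max := by
      intro j hj hq
      exact Finset.le_max (by simp; exact ⟨by omega, hq⟩)
    rcases hp : ((Finset.range (w.length + 1)).filter
      (fun i => dStar δ r (w.take i) = p)).max with _ | m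
    · exact lt_of_lt_of_le (WithBot.bot_lt_coe j) (key j hj hq)
    · have hm' := Finset.mem_of_max hp
      simp only [Finset.mem_filter, Finset.mem_range] at hm'
      obtain ⟨j, hj, hlt, hq⟩ := h m (by omega) hm'.2
      exact lt_of_lt_of_le (WithBot.coe_lt_coe.2 hlt) (key j hj hq)

theorem destutter_exists {V : Type*} (E : V → V → Prop) (s : ℕ → V) (N : ℕ)
    (h : ∀ i < N, E (s i) (s (i + 1)) ∨ s (i + 1) = s i) :
    ∃ (k : ℕ) (ρ : ℕ → V) (f : ℕ → ℕ), IsPath E k ρ ∧ f N = k ∧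
      (∀ i j, i ≤ j → j ≤ N → f i ≤ f j) ∧ (∀ m ≤ k, ∃ i ≤ N, f i = m) ∧
      ∀ i ≤ N, ρ (f i) = s i := by
  induction N with
  | zero =>
    refine ⟨0, fun _ => s 0, fun _ => 0, ?_, rfl, ?_, ?_, ?_⟩
    · intro i hi; omega
    · intros; rfl
    · intro m hm; exact ⟨0, le_rfl, by simp; omega⟩
    · intro i hi; simp at hi; simp [hi]
  | succ N ih =>
    obtain ⟨k, ρ, f, hP, hN, hmono, hsurj, hs⟩ := ih (fun i hi => h i (by omega))
    rcases h N (by omega) with hE | hE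
    · refine ⟨k + 1, fun i => if i ≤ k then ρ i else s (N + 1),
        fun i => if i ≤ N then f i else k + 1, ?_, by simp, ?_, ?_, ?_⟩
      · intro i hi
        by_cases hik : i = k
        · have := hs N le_rfl
          rw [hN] at this
          simp [hik, this, hE]
        · have : i < k := by omega
          simpa [this.le, this] using hP i this
      · intro i j hij hj
        have h5 : i ≤ N → f i ≤ k := fun h6 => hN ▸ hmono i N h6 le_rfl
        have h6 := hmono i j hij
        dsimp only
        split_ifs <;> first | omega | skip
      · intro m hm
        by_cases hmk : m = k + 1
        · exact ⟨N + 1, le_rfl, by simp [hmk]⟩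
        · obtain ⟨i, hi, hf⟩ := hsurj m (by omega)
          exact ⟨i, by omega, by simp [hi, hf]⟩
      · intro i hi
        by_cases hiN : i ≤ N
        · have : f i ≤ k := hN ▸ hmono i N hiN le_rfl
          simp [hiN, this, hs i hiN]
        · have : i = N + 1 := by omega
          simp [this]
    · refine ⟨k, ρ, fun i => if i ≤ N then f i else k, hP, by simp, ?_, ?_, ?_⟩
      · intro i j hij hj
        have h5 : i ≤ N → f i ≤ k := fun h6 => hN ▸ hmono i N h6 le_rfl
        have h6 := hmono i j hij
        dsimp only
        split_ifs <;> first | omega | skip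
      · intro m hm
        obtain ⟨i, hi, hf⟩ := hsurj m (by omega)
        exact ⟨i, by omega, by simp [hi, hf]⟩
      · intro i hi
        by_cases hiN : i ≤ N
        · simp [hiN, hs i hiN]
        · have : i = N + 1 := by omega
          have h7 := hs N le_rfl
          rw [hN] at h7
          simp [this, hE, h7]

theorem dStar_append {Q A : Type*} (δ : Q → A → Q) (q : Q) (u v : List A) :
    dStar δ q (u ++ v) = dStar δ (dStar δ q u) v := by
  simp [dStar]

theorem exists_word_path {V A : Type*} (E : V → V → Prop) (δ : V → A → V)
    (h2 : ∀ u v : V, E u v → ∃ a : A, δ u a = v) (ρ : ℕ → V) (k : ℕ) (h : IsPath E k ρ) :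
    ∃ x : List A, x.length = k ∧ ∀ i ≤ k, dStar δ (ρ 0) (x.take i) = ρ i := by
  induction k with
  | zero => exact ⟨[], rfl, fun i hi => by simp at hi; simp [hi, dStar]⟩
  | succ k ih =>
    obtain ⟨x, hx, hs⟩ := ih (fun i hi => h i (by omega))
    obtain ⟨a, ha⟩ := h2 _ _ (h k (by omega))
    refine ⟨x ++ [a], by simp [hx], fun i hi => ?_⟩
    by_cases hik : i ≤ k
    · rw [List.take_append_of_le_length (by omega)]
      exact hs i hik
    · have hi' : i = k + 1 := by omega
      have h8 := hs k le_rfl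
      rw [List.take_of_length_le (by omega)] at h8
      rw [List.take_of_length_le (by simp; omega), dStar_append, h8, hi', ← ha]
      rfl

theorem exists_word_reach {V A : Type*} (E : V → V → Prop) (δ : V → A → V)
    (h2 : ∀ u v : V, E u v → ∃ a : A, δ u a = v) (u v : V) (h : Relation.ReflTransGen E u v) :
    ∃ x : List A, dStar δ u x = v := by
  induction h with
  | refl => exact ⟨[], rfl⟩
  | tail _ hE ih =>
    obtain ⟨x, hx⟩ := ih
    obtain ⟨a, ha⟩ := h2 _ _ hE
    exact ⟨x ++ [a], by rw [dStar_append, hx, ← ha]; rfl⟩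

theorem lastVisitsTraversal_iff_constrainedSync {V A : Type*} [Fintype V]
    [DecidableEq V] [Fintype A]
    (E : V → V → Prop) (R : Set (V × V))
    (hSC : ∀ u v : V, Relation.ReflTransGen E u v)
    (δ : V → A → V)
    (h1 : ∀ (q : V) (a : A), E q (δ q a) ∨ δ q a = q)
    (h2 : ∀ u v : V, E u v → ∃ a : A, δ u a = v)
    (h3 : ∃ w : List A, Synchronizes δ w) :
    (∃ (k : ℕ) (ρ : ℕ → V), IsPath E k ρ ∧ LastVisits R k ρ) ↔
    (∃ w : List A, Synchronizes δ w ∧ R ⊆ RelLtLtPaths δ w) := by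
  constructor
  · rintro ⟨k, ρ, hP, hL⟩
    obtain ⟨s, q0, hs⟩ := h3
    obtain ⟨u, hu⟩ := exists_word_reach E δ h2 _ _ (hSC q0 (ρ 0))
    obtain ⟨x, hx, hxs⟩ := exists_word_path E δ h2 ρ k hP
    obtain ⟨y, hy⟩ : ∃ y : List A, ∀ r, dStar δ r y = ρ 0 :=
      ⟨s ++ u, fun r => by rw [dStar_append, hs, hu]⟩
    have hrun : ∀ r, ∀ i ≤ k, dStar δ r ((y ++ x).take (y.length + i)) = ρ i := by
      intro r i hi
      rw [List.take_length_add_append, dStar_append, hy, hxs i hi]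
    refine ⟨y ++ x, ⟨dStar δ (ρ 0) x, fun r => by rw [dStar_append, hy]⟩, ?_⟩
    rintro ⟨p, q⟩ hpq
    obtain ⟨⟨j, hj, hjq⟩, hl⟩ := hL _ hpq
    dsimp only at hjq hl
    refine ⟨?_, fun r => ?_⟩
    · rintro (rfl : p = q)
      have : ∀ n, ∃ i ≤ k, n ≤ i ∧ ρ i = p := by
        intro n
        induction n with
        | zero => exact ⟨j, hj, by omega, hjq⟩
        | succ n ih =>
          obtain ⟨i, hi, hn, hp⟩ := ih
          obtain ⟨j, hj, hij, hq⟩ := hl i hi hp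
          exact ⟨j, hj, by omega, hq⟩
      obtain ⟨i, hi, hn, _⟩ := this (k + 1)
      omega
    · rw [lastVisit_lt_iff]
      dsimp only
      simp only [List.length_append, hx]
      refine ⟨⟨y.length + j, by omega, by rw [hrun r j hj, hjq]⟩, fun i hi hp => ?_⟩
      by_cases hiy : i < y.length
      · exact ⟨y.length + j, by omega, by omega, by rw [hrun r j hj, hjq]⟩
      · obtain ⟨i', rfl⟩ := Nat.exists_eq_add_of_le (not_lt.1 hiy)
        rw [hrun r i' (by omega)] at hp
        obtain ⟨j', hj', hij, hq⟩ := hl i' (by omega) hp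
        exact ⟨y.length + j', by omega, by omega, by rw [hrun r j' hj', hq]⟩
  · rintro ⟨w, ⟨q0, _⟩, hR⟩
    obtain ⟨k, ρ, f, hP, hN, hmono, hsurj, hs⟩ :=
      destutter_exists E (fun i => dStar δ q0 (w.take i)) w.length (by
        intro i hi
        have : dStar δ q0 (w.take (i + 1)) = δ (dStar δ q0 (w.take i)) w[i] := by
          rw [List.take_succ_eq_append_getElem hi, dStar_append]; rfl
        rw [this]
        exact h1 _ _)
    refine ⟨k, ρ, hP, ?_⟩
    rintro ⟨p, q⟩ hpq
    obtain ⟨hne, hlt⟩ := hR hpq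
    obtain ⟨⟨j, hj, hjq⟩, hl⟩ := (lastVisit_lt_iff _ _ _ _ _).1 (hlt q0)
    dsimp only at hne hjq hl ⊢
    have hfk : ∀ i ≤ w.length, f i ≤ k := fun i hi => hN ▸ hmono i _ hi le_rfl
    refine ⟨⟨f j, hfk j hj, by rw [hs j hj, hjq]⟩, fun i hi hp => ?_⟩
    obtain ⟨i', hi', rfl⟩ := hsurj i hi
    rw [hs i' hi'] at hp
    obtain ⟨j', hj', hij, hq⟩ := hl i' hi' hp
    refine ⟨f j', hfk j' hj', lt_of_le_of_ne (hmono _ _ hij.le hj') ?_, by rw [hs j' hj', hq]⟩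
    intro heq
    have h9 := hs j' hj'
    rw [← heq, hs i' hi'] at h9
    exact hne (hp.symm.trans (h9.trans hq))
end

section
/- Let A = (Q, Σ, δ) be a synchronizing complete DFA, let C ⊆ Q be a strongly connected component of the underlying digraph of A that is a sink, and let R ⊆ C × C. Let G_C be the digraph with vertex set C and edge set {(q, δ(q, a)) : q ∈ C, a ∈ Σ} (all these edges stay inside C since C is a sink). Then there exists a word w ∈ Σ* that synchronizes A and satisfies R ⊆ ℛ^{ℓ<ℓ}_p(w) if and only if G_C contains a path satisfying the Last-Visits conditions for R. -/
/-- The edge relation of the underlying digraph of the DFA `δ`. -/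
def UEdge {Q A : Type*} (δ : Q → A → Q) (u v : Q) : Prop :=
  ∃ a : A, δ u a = v

theorem finset_max_lt_iff (S T : Finset ℕ) :
    S.max < T.max ↔ T.Nonempty ∧ ∀ i ∈ S, ∃ j ∈ T, i < j := by
  constructor
  · intro h
    have hT : T.Nonempty := by
      by_contra hn
      rw [Finset.not_nonempty_iff_eq_empty] at hn
      subst hn
      simp at h
    refine ⟨hT, fun i hi => ?_⟩
    obtain ⟨m, hm⟩ := Finset.max_of_nonempty hT
    refine ⟨m, Finset.mem_of_max hm, ?_⟩
    have h1 := lt_of_le_of_lt (Finset.le_max hi) h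
    rw [hm] at h1
    exact WithBot.coe_lt_coe.mp h1
  · rintro ⟨⟨t, ht⟩, h⟩
    rcases S.eq_empty_or_nonempty with rfl | hS
    · exact lt_of_lt_of_le (by simp) (Finset.le_max ht)
    · obtain ⟨m, hm⟩ := Finset.max_of_nonempty hS
      obtain ⟨j, hj, hlt⟩ := h m (Finset.mem_of_max hm)
      rw [hm]
      exact lt_of_lt_of_le (WithBot.coe_lt_coe.mpr hlt) (Finset.le_max hj)

theorem reach_dStar {Q A : Type*} (δ : Q → A → Q) (w : List A) :
    ∀ q : Q, Relation.ReflTransGen (UEdge δ) q (dStar δ q w) := by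
  induction w with
  | nil => intro q; exact Relation.ReflTransGen.refl
  | cons a w ih =>
    intro q
    exact Relation.ReflTransGen.head ⟨a, rfl⟩ (ih (δ q a))

theorem exists_word_of_reach {Q A : Type*} (δ : Q → A → Q) {p q : Q}
    (h : Relation.ReflTransGen (UEdge δ) p q) : ∃ u : List A, dStar δ p u = q := by
  induction h with
  | refl => exact ⟨[], rfl⟩
  | tail _ e ih =>
    obtain ⟨u, hu⟩ := ih
    obtain ⟨a, ha⟩ := e
    exact ⟨u ++ [a], by rw [dStar_append, hu]; exact ha⟩

theorem exists_word_of_path {Q A : Type*} (δ : Q → A → Q) (ρ : ℕ → Q) (k : ℕ)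
    (h : ∀ i < k, UEdge δ (ρ i) (ρ (i + 1))) :
    ∃ x : List A, x.length = k ∧ ∀ i ≤ k, dStar δ (ρ 0) (x.take i) = ρ i := by
  induction k with
  | zero =>
    refine ⟨[], rfl, fun i hi => ?_⟩
    obtain rfl : i = 0 := by omega
    rfl
  | succ k ih =>
    obtain ⟨x, hx, hv⟩ := ih (fun i hi => h i (by omega))
    obtain ⟨a, ha⟩ := h k (by omega)
    refine ⟨x ++ [a], by simp [hx], fun i hi => ?_⟩
    rcases Nat.lt_or_ge k i with h1 | h1
    · obtain rfl : i = k + 1 := by omega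
      have h2 := hv k le_rfl
      rw [List.take_of_length_le (by omega)] at h2
      rw [List.take_of_length_le (by simp [hx]), dStar_append, h2]
      exact ha
    · rw [List.take_append_of_le_length (by omega)]
      exact hv i h1

theorem constrainedSync_iff_lastVisitsTraversal_on_sink {Q A : Type*}
    [Fintype Q] [DecidableEq Q]
    (δ : Q → A → Q)
    (hsync : ∃ w : List A, Synchronizes δ w)
    (C : Set Q)
    (hSCC : ∃ q0 : Q, C = {q | Relation.ReflTransGen (UEdge δ) q0 q ∧
                               Relation.ReflTransGen (UEdge δ) q q0})
    (hsink : ∀ p ∈ C, ∀ q : Q, Relation.ReflTransGen (UEdge δ) p q → q ∈ C)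
    (R : Set (Q × Q)) (hR : ∀ p ∈ R, p.1 ∈ C ∧ p.2 ∈ C) :
    (∃ w : List A, Synchronizes δ w ∧ R ⊆ RelLtLtPaths δ w) ↔
    (∃ (k : ℕ) (ρ : ℕ → Q), (∀ i ≤ k, ρ i ∈ C) ∧
      (∀ i < k, UEdge δ (ρ i) (ρ (i + 1))) ∧ LastVisits R k ρ) := by
  constructor
  · rintro ⟨w, -, hw⟩
    obtain ⟨q0, hC⟩ := hSCC
    have hq0 : q0 ∈ C := by
      rw [hC]; exact ⟨Relation.ReflTransGen.refl, Relation.ReflTransGen.refl⟩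
    refine ⟨w.length, fun i => dStar δ q0 (w.take i), ?_, ?_, ?_⟩
    · intro i _
      exact hsink q0 hq0 _ (reach_dStar δ _ _)
    · intro i hi
      refine ⟨w[i], ?_⟩
      show _ = dStar δ q0 (w.take (i + 1))
      rw [List.take_succ_eq_append_getElem hi, dStar_append]
      rfl
    · intro p hp
      exact (lastVisit_lt_iff δ w q0 p.1 p.2).mp ((hw hp).2 q0)
  · rintro ⟨k, ρ, hρC, hρE, hLV⟩
    obtain ⟨w0, s, hs⟩ := hsync
    obtain ⟨q0, hC⟩ := hSCC
    have hq0 : q0 ∈ C := by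
      rw [hC]; exact ⟨Relation.ReflTransGen.refl, Relation.ReflTransGen.refl⟩
    have hsC : s ∈ C := by
      have h1 := hsink q0 hq0 _ (reach_dStar δ w0 q0)
      rwa [hs] at h1
    have h0 := hρC 0 (Nat.zero_le _)
    rw [hC] at hsC h0
    obtain ⟨u, hu⟩ := exists_word_of_reach δ (hsC.2.trans h0.1)
    obtain ⟨x, hxl, hx⟩ := exists_word_of_path δ ρ k hρE
    have hpre : ∀ r, dStar δ r (w0 ++ u) = ρ 0 := by
      intro r; rw [dStar_append, hs, hu]
    generalize w0 ++ u = y at hpre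
    have hvis : ∀ r, ∀ i ≤ k, dStar δ r ((y ++ x).take (y.length + i)) = ρ i := by
      intro r i hi
      rw [List.take_length_add_append, dStar_append, hpre, hx i hi]
    have hlen : (y ++ x).length = y.length + k := by simp [hxl]
    refine ⟨y ++ x, ⟨dStar δ (ρ 0) x, fun q => by rw [dStar_append, hpre]⟩, fun p hp => ?_⟩
    have key : ∀ r, lastVisit δ (y ++ x) r p.1 < lastVisit δ (y ++ x) r p.2 := by
      intro r
      rw [lastVisit_lt_iff, hlen]
      obtain ⟨⟨j, hj, hjp⟩, h2⟩ := hLV p hp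
      refine ⟨⟨y.length + j, by omega, by rw [hvis r j hj, hjp]⟩, fun i hi hip => ?_⟩
      rcases Nat.lt_or_ge i y.length with hlt | hge
      · exact ⟨y.length + j, by omega, by omega, by rw [hvis r j hj, hjp]⟩
      · obtain ⟨m, rfl⟩ := Nat.exists_eq_add_of_le hge
        rw [hvis r m (by omega)] at hip
        obtain ⟨l, hl, hml, hlp⟩ := h2 m (by omega) hip
        exact ⟨y.length + l, by omega, by omega, by rw [hvis r l hl, hlp]⟩
    refine ⟨fun he => ?_, key⟩
    have h3 := key s
    rw [he] at h3
    exact lt_irrefl _ h3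
end

section
/- Let A = (Q, Σ, δ) be a partial DFA with |Q| ≥ 2, fix a state t ∈ Q, and let q⊖, r be two distinct fresh states not in Q. Define the complete DFA A' = (Q ∪ {q⊖, r}, Σ, δ') by: δ'(q, a) = δ(q, a) for q ∈ Q and a ∈ Σ whenever δ(q, a) is defined; δ'(q, a) = q⊖ for q ∈ Q and a ∈ Σ whenever δ(q, a) is undefined; and δ'(q⊖, a) = δ'(r, a) = δ'(t, a) for every a ∈ Σ (that is, both equal δ(t, a) if it is defined and q⊖ otherwise). Then for every word w ∈ Σ*: w carefully synchronizes A if and only if w synchronizes A' and (q⊖, r) ∈ ℛ^{ℓ≤ℓ}(w) with respect to A'. -/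
/-- Extension of the partial transition function `δ` to words. -/
def pStar {Q A : Type*} (δ : Q → A → Option Q) (q : Q) (w : List A) : Option Q :=
  w.foldl (fun o a => o.bind fun p => δ p a) (some q)

/-- A word `w` carefully synchronizes the partial DFA `δ`. -/
def CarefullySync {Q A : Type*} (δ : Q → A → Option Q) (w : List A) : Prop :=
  ∃ q0 : Q, ∀ q : Q, pStar δ q w = some q0

/-- `last(p, w, Q)`: the largest `i ≤ |w|` with `p ∈ δ(Q, w[1..i])`,
or `⊥ = -∞` if there is none. -/
def lastVisitSet {Q A : Type*} [Fintype Q] [DecidableEq Q] (δ : Q → A → Q)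
    (w : List A) (p : Q) : WithBot ℕ :=
  ((Finset.range (w.length + 1)).filter
    (fun i => ∃ q : Q, dStar δ q (w.take i) = p)).max

/-- The traversal relation `ℛ^{ℓ≤ℓ}(w)` ("ℓ ≤ ℓ on sets"). -/
def RelLeLeSets {Q A : Type*} [Fintype Q] [DecidableEq Q] (δ : Q → A → Q)
    (w : List A) : Set (Q × Q) :=
  {pq | pq.1 ≠ pq.2 ∧ lastVisitSet δ w pq.1 ≤ lastVisitSet δ w pq.2}

/-- The completion `A'` of the partial DFA `δ`: states are `Q ⊕ Bool`, where
`Sum.inr false` is the fresh state `q⊖` and `Sum.inr true` is the fresh state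
`r`. Undefined transitions from `Q` go to `q⊖`, and from `q⊖` and `r` every
letter acts as it acts from the fixed state `t`. -/
def extDelta {Q A : Type*} (δ : Q → A → Option Q) (t : Q) :
    Q ⊕ Bool → A → Q ⊕ Bool :=
  fun s a =>
    match s with
    | Sum.inl q => (δ q a).elim (Sum.inr false) Sum.inl
    | Sum.inr _ => (δ t a).elim (Sum.inr false) Sum.inl

theorem pFold_none {Q A : Type*} (δ : Q → A → Option Q) (w : List A) :
    w.foldl (fun o a => o.bind fun p => δ p a) none = none := by
  induction w with
  | nil => rfl
  | cons a w ih => simpa using ih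

theorem pStar_cons_some {Q A : Type*} (δ : Q → A → Option Q) (q p : Q) (a : A) (w : List A)
    (h : δ q a = some p) : pStar δ q (a :: w) = pStar δ p w := by
  simp [pStar, h]

theorem pStar_cons_none {Q A : Type*} (δ : Q → A → Option Q) (q : Q) (a : A) (w : List A)
    (h : δ q a = none) : pStar δ q (a :: w) = none := by
  simp [pStar, h, pFold_none]

theorem dStar_of_pStar {Q A : Type*} (δ : Q → A → Option Q) (t : Q) (w : List A) :
    ∀ q p : Q, pStar δ q w = some p →
      dStar (extDelta δ t) (Sum.inl q) w = Sum.inl p ∧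
      ∀ i, ∃ p', dStar (extDelta δ t) (Sum.inl q) (w.take i) = Sum.inl p' := by
  induction w with
  | nil =>
    intro q p h
    simp only [pStar, List.foldl_nil, Option.some.injEq] at h
    subst h
    exact ⟨rfl, fun i => ⟨q, by simp [dStar]⟩⟩
  | cons a w ih =>
    intro q p h
    cases hq : δ q a with
    | none => rw [pStar_cons_none δ q a w hq] at h; cases h
    | some q' =>
      rw [pStar_cons_some δ q q' a w hq] at h
      obtain ⟨h1, h2⟩ := ih q' p h
      refine ⟨?_, ?_⟩
      · simpa [dStar, extDelta, hq] using h1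
      · intro i
        cases i with
        | zero => exact ⟨q, rfl⟩
        | succ i =>
          obtain ⟨p', hp⟩ := h2 i
          exact ⟨p', by simpa [dStar, extDelta, hq] using hp⟩

theorem pStar_of_dStar {Q A : Type*} (δ : Q → A → Option Q) (t : Q) (w : List A) :
    ∀ q : Q, (∀ i, 1 ≤ i → i ≤ w.length →
      dStar (extDelta δ t) (Sum.inl q) (w.take i) ≠ Sum.inr false) →
      ∃ p, pStar δ q w = some p := by
  induction w with
  | nil => intro q _; exact ⟨q, rfl⟩
  | cons a w ih =>
    intro q h
    cases hq : δ q a with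
    | none => exact absurd (by simp [dStar, extDelta, hq]) (h 1 le_rfl (by simp))
    | some q' =>
      rw [pStar_cons_some δ q q' a w hq]
      apply ih
      intro i h1 h2 h3
      apply h (i + 1) (by omega) (by simpa using h2)
      simpa [dStar, extDelta, hq] using h3

theorem dStar_inr_cons {Q A : Type*} (δ : Q → A → Option Q) (t : Q) (b : Bool) (a : A)
    (w : List A) : dStar (extDelta δ t) (Sum.inr b) (a :: w) =
      dStar (extDelta δ t) (Sum.inl t) (a :: w) := rfl

theorem extDelta_ne {Q A : Type*} (δ : Q → A → Option Q) (t : Q) (s : Q ⊕ Bool) (a : A) :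
    extDelta δ t s a ≠ Sum.inr true := by
  rcases s with q | b
  · cases h : δ q a <;> simp [extDelta, h]
  · cases h : δ t a <;> simp [extDelta, h]

theorem dStar_ne {Q A : Type*} (δ : Q → A → Option Q) (t : Q) (w : List A) (hw : w ≠ [])
    (s : Q ⊕ Bool) : dStar (extDelta δ t) s w ≠ Sum.inr true := by
  obtain ⟨u, a, rfl⟩ := List.eq_nil_or_concat w |>.resolve_left hw
  simp only [dStar, List.foldl_append, List.concat_eq_append]
  exact extDelta_ne δ t _ a

theorem carefullySync_iff_sync_relLeLeSets {Q A : Type*} [Fintype Q]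
    [DecidableEq Q] (hQ : 2 ≤ Fintype.card Q)
    (δ : Q → A → Option Q) (t : Q) (w : List A) :
    CarefullySync δ w ↔
      Synchronizes (extDelta δ t) w ∧
        ((Sum.inr false, Sum.inr true) : (Q ⊕ Bool) × (Q ⊕ Bool)) ∈
          RelLeLeSets (extDelta δ t) w := by
  constructor
  · rintro ⟨q0, h⟩
    cases w with
    | nil =>
      exfalso
      have : Nontrivial Q := Fintype.one_lt_card_iff_nontrivial.mp hQ
      obtain ⟨x, y, hxy⟩ := exists_pair_ne Q
      have hx := h x
      have hy := h y
      simp only [pStar, List.foldl_nil, Option.some.injEq] at hx hy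
      exact hxy (hx.trans hy.symm)
    | cons a w =>
      refine ⟨⟨Sum.inl q0, ?_⟩, by simp, ?_⟩
      · rintro (q | b)
        · exact (dStar_of_pStar δ t _ q q0 (h q)).1
        · rw [dStar_inr_cons]
          exact (dStar_of_pStar δ t _ t q0 (h t)).1
      · apply Finset.max_mono
        intro i hi
        rw [Finset.mem_filter] at hi ⊢
        refine ⟨hi.1, ?_⟩
        obtain ⟨s, hs⟩ := hi.2
        cases i with
        | zero => exact ⟨Sum.inr true, rfl⟩
        | succ i =>
          exfalso
          rcases s with q | b
          · obtain ⟨p, hp⟩ := (dStar_of_pStar δ t _ q q0 (h q)).2 (i + 1)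
            rw [hp] at hs; cases hs
          · obtain ⟨p, hp⟩ := (dStar_of_pStar δ t _ t q0 (h t)).2 (i + 1)
            rw [List.take_succ_cons] at hp hs
            rw [dStar_inr_cons, hp] at hs; cases hs
  · rintro ⟨⟨s0, hs⟩, -, hle⟩
    have key : ∀ q : Q, ∃ p, pStar δ q w = some p := by
      intro q
      apply pStar_of_dStar δ t w q
      intro i h1 h2 h3
      have hi : WithBot.some i ≤ lastVisitSet (extDelta δ t) w (Sum.inr false) := by
        apply Finset.le_max
        rw [Finset.mem_filter, Finset.mem_range]
        exact ⟨by omega, _, h3⟩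
      have hr : lastVisitSet (extDelta δ t) w (Sum.inr true) ≤ WithBot.some 0 := by
        apply Finset.max_le
        intro j hj
        rw [Finset.mem_filter, Finset.mem_range] at hj
        obtain ⟨hj1, s, hj2⟩ := hj
        rcases Nat.eq_zero_or_pos j with rfl | hpos
        · exact le_rfl
        · refine absurd hj2 (dStar_ne δ t _ ?_ s)
          intro h0
          have := congrArg List.length h0
          simp only [List.length_take, List.length_nil] at this
          omega
      have := WithBot.coe_le_coe.mp ((hi.trans hle).trans hr)
      omega
    obtain ⟨q0, hq0⟩ := key t
    refine ⟨q0, fun q => ?_⟩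
    obtain ⟨p, hp⟩ := key q
    have e1 := (dStar_of_pStar δ t w q p hp).1
    have e2 := (dStar_of_pStar δ t w t q0 hq0).1
    rw [hs] at e1 e2
    rw [hp, Sum.inl.inj (e1.symm.trans e2)]
end
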